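/- arXiv:2507.05243 — 2 statements merged into one kernel-verified Lean document; each statement's English description precedes it below -/
import Mathlib

section
/- Let G be a finite group, let Irr(G) be a complete set of pairwise non-isomorphic irreducible complex representations of G (i.e. representatives of all isomorphism classes of finite-dimensional simple ℂ[G]-modules), let d_π denote the degree (ℂ-dimension) of π ∈ Irr(G), and let D = max_{π ∈ Irr(G)} d_π. Then (1/|G|) · Σ_{π ∈ Irr(G)} (d_π)³ ≤ 1 + (D − 1)·(1 − 1/|[G,G]|), where [G,G] denotes the commutator subgroup of G. -/
/-!
By the density theorem the group algebra surjects onto the product of the `End_k (V i)`, whence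
`∑ dᵢ² ≤ |G|`, and the `|G/[G,G]|` linear characters all occur among the `V i`. Now sum
`dᵢ³ ≤ D dᵢ²` over all `i`, saving `D - 1` for each `dᵢ = 1`, to get
`∑ dᵢ³ ≤ D |G| - (D - 1) |G/[G,G]|`.
-/

open Module (End finrank)
open scoped MonoidAlgebra Finset

universe u

section Density

theorem linearMap_eq_zero_of_isEmpty_linearEquiv {A M N : Type*} [Ring A] [AddCommGroup M]
    [Module A M] [AddCommGroup N] [Module A N] [IsSimpleModule A M] [IsSimpleModule A N]
    (h : IsEmpty (M ≃ₗ[A] N)) (f : M →ₗ[A] N) : f = 0 :=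
  f.bijective_or_eq_zero.resolve_left fun hf ↦ h.false (.ofBijective f hf)

variable {k A ι : Type*} [Field k] [IsAlgClosed k] [Ring A] [Algebra k A] (V : ι → Type*)
  [∀ i, AddCommGroup (V i)] [∀ i, Module A (V i)] [∀ i, Module k (V i)]
  [∀ i, IsScalarTower k A (V i)] [∀ i, IsSimpleModule A (V i)]

variable {V} in
theorem exists_end_pi_apply_eq_smul [Finite ι] [∀ i, FiniteDimensional k (V i)]
    (hpairwise : ∀ i j, Nonempty (V i ≃ₗ[A] V j) → i = j) (φ : End A (∀ i, V i)) :
    ∃ c : ι → k, ∀ v i, φ v i = c i • v i := by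
  classical
  have := Fintype.ofFinite ι
  let block (i j : ι) : V j →ₗ[A] V i := .proj i ∘ₗ φ ∘ₗ .single A V j
  have block_eq_zero {i j : ι} (hij : j ≠ i) : block i j = 0 :=
    linearMap_eq_zero_of_isEmpty_linearEquiv
      (not_nonempty_iff.mp fun e ↦ hij (hpairwise j i e)) _
  have schur (i : ι) : ∃ c : k, algebraMap k (End A (V i)) c = block i i :=
    (IsSimpleModule.algebraMap_end_bijective_of_isAlgClosed k).2 _
  choose c hc using schur
  refine ⟨c, fun v i ↦ ?_⟩
  calc φ v i = ∑ j, block i j (v j) := by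
        conv_lhs => rw [← Finset.univ_sum_single v, map_sum, Finset.sum_apply]
        rfl
    _ = block i i (v i) :=
        Finset.sum_eq_single i (fun j _ hj ↦ by rw [block_eq_zero hj, LinearMap.zero_apply])
          (by simp)
    _ = c i • v i := by rw [← hc, Module.algebraMap_end_apply]

theorem pi_lsmul_surjective [Finite ι] [∀ i, FiniteDimensional k (V i)]
    (hpairwise : ∀ i j, Nonempty (V i ≃ₗ[A] V j) → i = j) :
    Function.Surjective
      (LinearMap.pi fun i ↦ (Algebra.lsmul k k (V i) : A →ₐ[k] End k (V i)).toLinearMap) := by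
  classical
  intro f
  let F : End (End A (∀ i, V i)) (∀ i, V i) :=
    { toFun := fun v i ↦ f i (v i)
      map_add' := fun v w ↦ by ext; simp
      map_smul' := fun φ v ↦ by
        obtain ⟨c, hc⟩ := exists_end_pi_apply_eq_smul (k := k) hpairwise φ
        ext i
        simp [hc] }
  have : Module.Finite (End A (∀ i, V i)) (∀ i, V i) := .of_restrictScalars_finite k _ _
  obtain ⟨a, ha⟩ := Module.Finite.toModuleEnd_moduleEnd_surjective (R := A) F
  refine ⟨a, funext fun i ↦ LinearMap.ext fun v ↦ ?_⟩
  simpa [F] using congr($ha (Pi.single i v) i)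

theorem sum_finrank_sq_le_finrank [FiniteDimensional k A] [Fintype ι]
    (hpairwise : ∀ i j, Nonempty (V i ≃ₗ[A] V j) → i = j) :
    ∑ i, finrank k (V i) ^ 2 ≤ finrank k A := by
  have (i : ι) : FiniteDimensional k (V i) := Module.Finite.trans A (V i)
  simpa [Module.finrank_pi_fintype, Module.finrank_linearMap, sq] using
    LinearMap.finrank_le_finrank_of_surjective (pi_lsmul_surjective (k := k) V hpairwise)

end Density

section LinearCharacters

/-- The module `W` over the group algebra affords the linear character `χ`: it is a line on which
`G` acts through `χ`. -/
def Affords {k G : Type*} [Field k] [Group G] (χ : G →* kˣ) (W : Type*) [AddCommGroup W]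
    [Module k[G] W] [Module k W] : Prop :=
  finrank k W = 1 ∧ ∀ (g : G) (w : W), MonoidAlgebra.of k G g • w = (χ g : k) • w

/-- The one-dimensional representation of `G` on `k` by the linear character `χ`. -/
def linearCharacterRep {k G : Type*} [Field k] [Group G] (χ : G →* kˣ) : Representation k G k :=
  (Algebra.lmul k k).toMonoidHom.comp ((Units.coeHom k).comp χ)

section Affords

variable {k G : Type*} [Field k] [Group G] {χ ψ : G →* kˣ}
  {W : Type*} [AddCommGroup W] [Module k[G] W] [Module k W]
  {W' : Type*} [AddCommGroup W'] [Module k[G] W'] [Module k W']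

theorem affords_asModule_linearCharacterRep (χ : G →* kˣ) :
    Affords χ (linearCharacterRep χ).asModule :=
  ⟨Module.finrank_self k, fun g w ↦ by
    simpa using! Representation.single_smul (linearCharacterRep χ) 1 g w⟩

theorem Affords.of_linearEquiv [IsScalarTower k k[G] W] [IsScalarTower k k[G] W']
    (h : Affords χ W) (e : W ≃ₗ[k[G]] W') : Affords χ W' := by
  let e' : W ≃ₗ[k] W' := e.restrictScalars k
  refine ⟨e'.finrank_eq ▸ h.1, fun g w' ↦ ?_⟩
  obtain ⟨w, rfl⟩ := e.surjective w'
  rw [← map_smul, h.2]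
  exact e'.map_smul _ w

theorem Affords.unique (hχ : Affords χ W) (hψ : Affords ψ W) : χ = ψ := by
  have : Nontrivial W := Module.nontrivial_of_finrank_eq_succ hχ.1
  obtain ⟨w, hw⟩ := exists_ne (0 : W)
  ext g
  exact smul_left_injective k hw ((hχ.2 g w).symm.trans (hψ.2 g w))

end Affords

theorem exists_affords_of_complete {k : Type u} {G ι : Type*} [Field k] [Group G] (V : ι → Type*)
    [∀ i, AddCommGroup (V i)] [∀ i, Module k[G] (V i)] [∀ i, Module k (V i)]
    [∀ i, IsScalarTower k k[G] (V i)]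
    (hcomplete : ∀ (W : Type u) [AddCommGroup W] [Module k[G] W] [Module k W]
      [IsScalarTower k k[G] W], IsSimpleModule k[G] W → FiniteDimensional k W →
        ∃ i : ι, Nonempty (W ≃ₗ[k[G]] V i))
    (χ : G →* kˣ) : ∃ i, Affords χ (V i) := by
  have hχ := affords_asModule_linearCharacterRep χ
  obtain ⟨i, ⟨e⟩⟩ := hcomplete (linearCharacterRep χ).asModule
    ((isSimpleModule_iff ..).mpr (is_simple_module_of_finrank_eq_one hχ.1)) inferInstance
  exact ⟨i, hχ.of_linearEquiv e⟩

theorem card_monoidHom_units_eq_card_abelianization (G M : Type*) [Group G] [Finite G]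
    [CommMonoid M] [HasEnoughRootsOfUnity M (Monoid.exponent (Abelianization G))] :
    Nat.card (G →* Mˣ) = Nat.card (Abelianization G) :=
  (Nat.card_congr Abelianization.lift).trans
    (CommGroup.card_monoidHom_of_hasEnoughRootsOfUnity (Abelianization G) M)

theorem card_abelianization_le_card_finrank_eq_one {k G ι : Type*} [Field k] [IsSepClosed k]
    [Group G] [Finite G] [NeZero (Nat.card (Abelianization G) : k)] [Fintype ι] (V : ι → Type*)
    [∀ i, AddCommGroup (V i)] [∀ i, Module k[G] (V i)] [∀ i, Module k (V i)]
    (haffords : ∀ χ : G →* kˣ, ∃ i, Affords χ (V i)) :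
    Nat.card (Abelianization G) ≤ #{i | finrank k (V i) = 1} := by
  have : HasEnoughRootsOfUnity k (Monoid.exponent (Abelianization G)) :=
    .of_dvd k (Group.exponent_dvd_nat_card (G := Abelianization G))
  choose i hi using haffords
  let i' (χ : G →* kˣ) : {i | finrank k (V i) = 1} := ⟨i χ, (hi χ).1⟩
  have hinj : Function.Injective i' := fun χ ψ h ↦ by
    have hiχψ : i χ = i ψ := congr_arg Subtype.val h
    exact (hiχψ ▸ hi χ).unique (hi ψ)
  rw [← card_monoidHom_units_eq_card_abelianization G k]
  simpa [Fintype.card_subtype] using Nat.card_le_card_of_injective i' hinj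

end LinearCharacters

theorem sum_cube_le_mul_sum_sq_sub {R ι : Type*} [CommRing R] [LinearOrder R]
    [IsStrictOrderedRing R] (s : Finset ι) (d : ι → R) {D : R} (hd : ∀ i ∈ s, d i ≤ D) :
    ∑ i ∈ s, d i ^ 3 ≤ D * ∑ i ∈ s, d i ^ 2 - (D - 1) * #{i ∈ s | d i = 1} := by
  rw [Finset.natCast_card_filter, Finset.mul_sum, Finset.mul_sum, ← Finset.sum_sub_distrib]
  refine Finset.sum_le_sum fun i hi ↦ ?_
  split_ifs with h
  · simp [h]
  · calc d i ^ 3 = d i * d i ^ 2 := by ring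
      _ ≤ D * d i ^ 2 := mul_le_mul_of_nonneg_right (hd i hi) (sq_nonneg _)
      _ = D * d i ^ 2 - (D - 1) * 0 := by ring

theorem card_abelianization_div_card (G K : Type*) [Group G] [Finite G] [Field K] [CharZero K] :
    (Nat.card (Abelianization G) / Nat.card G : K) = 1 / Nat.card (commutator G) := by
  have hG : (Nat.card G : K) = Nat.card (Abelianization G) * Nat.card (commutator G) := by
    exact_mod_cast Subgroup.card_eq_card_quotient_mul_card_subgroup (commutator G)
  rw [hG, div_mul_cancel_left₀ (NeZero.ne _), one_div]

theorem johnson_formula_upper_bound_general {k G ι : Type*} [Field k] [IsAlgClosed k] [Group G]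
    [Finite G] [NeZero (Nat.card (Abelianization G) : k)] [Fintype ι] (V : ι → Type*)
    [∀ i, AddCommGroup (V i)] [∀ i, Module k[G] (V i)] [∀ i, Module k (V i)]
    [∀ i, IsScalarTower k k[G] (V i)] [∀ i, IsSimpleModule k[G] (V i)]
    (hpairwise : ∀ i j, Nonempty (V i ≃ₗ[k[G]] V j) → i = j)
    (haffords : ∀ χ : G →* kˣ, ∃ i, Affords χ (V i))
    {D : ℕ} (hD : ∀ i, finrank k (V i) ≤ D) :
    1 / (Nat.card G : ℝ) * ∑ i, (finrank k (V i) : ℝ) ^ 3 ≤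
      1 + ((D : ℝ) - 1) * (1 - 1 / (Nat.card (commutator G) : ℝ)) := by
  let basis := MonoidAlgebra.basis G k
  have : FiniteDimensional k k[G] := .of_basis basis
  have hsq : ∑ i, (finrank k (V i) : ℝ) ^ 2 ≤ Nat.card G := by
    exact_mod_cast Module.finrank_eq_nat_card_basis basis ▸ sum_finrank_sq_le_finrank V hpairwise
  have hlin : (Nat.card (Abelianization G) : ℝ) ≤ #{i | (finrank k (V i) : ℝ) = 1} := by
    exact_mod_cast card_abelianization_le_card_finrank_eq_one V haffords
  have one_le_D : (1 : ℝ) ≤ D := by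
    obtain ⟨i, hi⟩ := haffords 1
    exact_mod_cast hi.1 ▸ hD i
  have card_ne_zero : (Nat.card G : ℝ) ≠ 0 := NeZero.ne _
  have hcube : ∑ i, (finrank k (V i) : ℝ) ^ 3 ≤
      D * Nat.card G - (D - 1) * Nat.card (Abelianization G) :=
    (sum_cube_le_mul_sum_sq_sub _ _ fun i _ ↦ Nat.cast_le.mpr (hD i)).trans <| by gcongr
  calc 1 / (Nat.card G : ℝ) * ∑ i, (finrank k (V i) : ℝ) ^ 3
      ≤ 1 / (Nat.card G : ℝ) * (D * Nat.card G - (D - 1) * Nat.card (Abelianization G)) := by gcongr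
    _ = D - (D - 1) * (Nat.card (Abelianization G) / Nat.card G) := by
        field_simp
    _ = 1 + (D - 1) * (1 - 1 / Nat.card (commutator G)) := by
        rw [card_abelianization_div_card]; ring

/-- Let `G` be a finite group, let `(V i)_{i : ι}` be a complete set of
pairwise non-isomorphic irreducible complex representations of `G` (finite-dimensional simple
`ℂ[G]`-modules), and let `D` be the maximal degree.  Then
`(1/|G|) * Σ_i (dim V i)^3 ≤ 1 + (D - 1) * (1 - 1/|[G,G]|)`. -/
theorem johnson_formula_upper_bound
    (G : Type*) [Group G] [Finite G]
    (ι : Type*) [Fintype ι]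
    (V : ι → Type*) [∀ i, AddCommGroup (V i)]
    [∀ i, Module (MonoidAlgebra ℂ G) (V i)]
    [∀ i, Module ℂ (V i)]
    [∀ i, IsScalarTower ℂ (MonoidAlgebra ℂ G) (V i)]
    (hsimple : ∀ i, IsSimpleModule (MonoidAlgebra ℂ G) (V i))
    (hfd : ∀ i, FiniteDimensional ℂ (V i))
    (hpairwise : ∀ i j : ι,
      Nonempty (V i ≃ₗ[MonoidAlgebra ℂ G] V j) → i = j)
    (hcomplete : ∀ (W : Type) [AddCommGroup W] [Module (MonoidAlgebra ℂ G) W]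
      [Module ℂ W] [IsScalarTower ℂ (MonoidAlgebra ℂ G) W],
      IsSimpleModule (MonoidAlgebra ℂ G) W → FiniteDimensional ℂ W →
        ∃ i : ι, Nonempty (W ≃ₗ[MonoidAlgebra ℂ G] V i))
    (D : ℕ) (hD : IsGreatest (Set.range fun i => Module.finrank ℂ (V i)) D) :
    (1 / (Nat.card G : ℝ)) * ∑ i : ι, (Module.finrank ℂ (V i) : ℝ) ^ 3 ≤
      1 + ((D : ℝ) - 1) * (1 - 1 / (Nat.card (commutator G) : ℝ)) :=
  johnson_formula_upper_bound_general V hpairwise (exists_affords_of_complete V hcomplete)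
    fun i ↦ hD.2 ⟨i, rfl⟩
end

section
/- Let p be a prime and n ≥ 1, and let G = Hr_p(ℤ/p^nℤ) be the p-reduced Heisenberg group over the ring ℤ/p^nℤ. Then |G| = p^{2n+1}; every irreducible complex representation of G has degree 1 or p; the number of isomorphism classes of irreducible complex representations of G of degree 1 is exactly p^{2n}; and the number of isomorphism classes of irreducible complex representations of G of degree p is exactly p^{2n-1} − p^{2n-2}. -/
/-- The Heisenberg group over a commutative unital ring `S`: the underlying set is
`S × S × S` with multiplication `(x,y,z)·(x',y',z') = (x+x', y+y', z+xy'+z')`. -/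
@[ext]
structure Heis (S : Type*) [CommRing S] where
  x : S
  y : S
  z : S

namespace Heis

variable {S : Type*} [CommRing S]

instance : Mul (Heis S) := ⟨fun a b => ⟨a.x + b.x, a.y + b.y, a.z + a.x * b.y + b.z⟩⟩
instance : One (Heis S) := ⟨⟨0, 0, 0⟩⟩
instance : Inv (Heis S) := ⟨fun a => ⟨-a.x, -a.y, a.x * a.y - a.z⟩⟩

@[simp] lemma mul_x (a b : Heis S) : (a * b).x = a.x + b.x := rfl
@[simp] lemma mul_y (a b : Heis S) : (a * b).y = a.y + b.y := rfl
@[simp] lemma mul_z (a b : Heis S) : (a * b).z = a.z + a.x * b.y + b.z := rfl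
@[simp] lemma one_x : (1 : Heis S).x = 0 := rfl
@[simp] lemma one_y : (1 : Heis S).y = 0 := rfl
@[simp] lemma one_z : (1 : Heis S).z = 0 := rfl
@[simp] lemma inv_x (a : Heis S) : a⁻¹.x = -a.x := rfl
@[simp] lemma inv_y (a : Heis S) : a⁻¹.y = -a.y := rfl
@[simp] lemma inv_z (a : Heis S) : a⁻¹.z = a.x * a.y - a.z := rfl

instance : Group (Heis S) where
  mul_assoc a b c := by ext <;> simp <;> ring
  one_mul a := by ext <;> simp
  mul_one a := by ext <;> simp
  inv_mul_cancel a := by ext <;> simp <;> ring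

end Heis

/-- The central subgroup `{(0,0,ps) : s ∈ S}` of the Heisenberg group `H(S)`. -/
def pCenter (p : ℕ) (S : Type*) [CommRing S] : Subgroup (Heis S) where
  carrier := {a | a.x = 0 ∧ a.y = 0 ∧ ∃ s : S, a.z = p * s}
  mul_mem' := by
    rintro a b ⟨hax, hay, s, hs⟩ ⟨hbx, hby, t, ht⟩
    refine ⟨by rw [Heis.mul_x, hax, hbx, add_zero],
      by rw [Heis.mul_y, hay, hby, add_zero], s + t, ?_⟩
    rw [Heis.mul_z, hs, ht, hax]; ring
  one_mem' := ⟨rfl, rfl, 0, by simp⟩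
  inv_mem' := by
    rintro a ⟨hax, hay, s, hs⟩
    exact ⟨by rw [Heis.inv_x, hax, neg_zero], by rw [Heis.inv_y, hay, neg_zero],
      -s, by rw [Heis.inv_z, hax, hs]; ring⟩

instance pCenter.normal (p : ℕ) (S : Type*) [CommRing S] : (pCenter p S).Normal := by
  constructor
  intro n hn g
  obtain ⟨hx, hy, hz⟩ := hn
  have hgn : g * n * g⁻¹ = n := by ext <;> simp [hx, hy] <;> ring
  rw [hgn]; exact ⟨hx, hy, hz⟩

/-- The `p`-reduced Heisenberg group over `S`: the quotient of `H(S)` by the central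
subgroup `{(0,0,ps) : s ∈ S}`. -/
abbrev HrP (p : ℕ) (S : Type*) [CommRing S] : Type _ := Heis S ⧸ pCenter p S

/-- The subgroup `{(0,0,s) : s ∈ S}` of `H(S)`. -/
def zSubgroup (S : Type*) [CommRing S] : Subgroup (Heis S) where
  carrier := {a | a.x = 0 ∧ a.y = 0}
  mul_mem' := by
    rintro a b ⟨hax, hay⟩ ⟨hbx, hby⟩
    exact ⟨by rw [Heis.mul_x, hax, hbx, add_zero], by rw [Heis.mul_y, hay, hby, add_zero]⟩
  one_mem' := ⟨rfl, rfl⟩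
  inv_mem' := by
    rintro a ⟨hax, hay⟩
    exact ⟨by rw [Heis.inv_x, hax, neg_zero], by rw [Heis.inv_y, hay, neg_zero]⟩

/-- The subgroup `K = {(0,0,[s]) : s ∈ S}` of the `p`-reduced Heisenberg group `Hr_p(S)`. -/
def Ksub (p : ℕ) (S : Type*) [CommRing S] : Subgroup (HrP p S) :=
  (zSubgroup S).map (QuotientGroup.mk' (pCenter p S))

instance Ksub.normal (p : ℕ) (S : Type*) [CommRing S] : (Ksub p S).Normal := by
  constructor
  intro n hn g
  obtain ⟨a, ⟨hax, hay⟩, rfl⟩ := hn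
  obtain ⟨b, rfl⟩ := QuotientGroup.mk'_surjective (pCenter p S) g
  refine ⟨b * a * b⁻¹, ⟨?_, ?_⟩, by simp⟩
  · simp [hax]
  · simp [hay]

/-!
Let `G` be a finite group whose commutator subgroup is central of prime order `p`, with centre of
index at most `p ^ 2`. On an irreducible representation of dimension `d`, a commutator acts by a
scalar `c` with `c ^ p = 1` by Schur's lemma, and taking determinants gives `c ^ d = 1`. Either all
these scalars are `1`, the operators commute and `d = 1`; or some `c` has order `p` and `p ∣ d`. The
operators span `End V` by Burnside's theorem, and elements of one coset of the centre act
proportionally, so `d ^ 2 ≤ p ^ 2`, which forces `d = p`. The representations of degree `1` are the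
characters of the abelianization, and those of degree `p` are then counted by `∑ d ^ 2 = |G|`.

For `G = Hr_p(S)` with `S / pS` of order `p`, the commutator of `[(x, y, z)]` and `[(x', y', z')]`
is `[(0, 0, xy' - x'y)]`: the commutator subgroup is a copy of `S / pS` with quotient `S × S`, and
the centre is cut out by `p ∣ x` and `p ∣ y`, so it has index `p ^ 2`.
-/

open Module

universe u v

/-- A complete set of representatives `(V i)` of the isomorphism classes of simple `A`-modules.
Every simple module is a quotient of `A`, so completeness is only asked for modules in the universe
of `A`. -/
structure IsCompleteSimpleFamily (A : Type u) [Ring A] {ι : Type*} (V : ι → Type*)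
    [∀ i, AddCommGroup (V i)] [∀ i, Module A (V i)] : Prop where
  isSimpleModule (i : ι) : IsSimpleModule A (V i)
  eq_of_equiv {i j : ι} : (V i ≃ₗ[A] V j) → i = j
  exists_equiv (W : Type u) [AddCommGroup W] [Module A W] [IsSimpleModule A W] :
    ∃ i, Nonempty (W ≃ₗ[A] V i)

section SimpleModule

variable (k A : Type*) [Field k] [Ring A] [Algebra k A]
  (V : Type*) [AddCommGroup V] [Module A V] [Module k V] [IsScalarTower k A V]

include A in
lemma finiteDimensional_of_isSimpleModule [FiniteDimensional k A] [IsSimpleModule A V] :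
    FiniteDimensional k V :=
  Module.Finite.trans A V

variable {A V} [IsAlgClosed k] [FiniteDimensional k V] [IsSimpleModule A V]

variable (A V) in
lemma finrank_end_eq_one : finrank k (End A V) = 1 := by
  have hschur := IsSimpleModule.algebraMap_end_bijective_of_isAlgClosed k (A := A) (V := V)
  rw [← (LinearEquiv.ofBijective (Algebra.linearMap k (End A V)) hschur).finrank_eq, finrank_self]

variable (V) in
/-- **Burnside's theorem** on matrix algebras. -/
theorem lsmul_surjective_of_isSimpleModule :
    Function.Surjective (Algebra.lsmul k k V : A → End k V) := by
  have hschur := (IsSimpleModule.algebraMap_end_bijective_of_isAlgClosed k (A := A) (V := V)).2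
  intro f
  let b := finBasis k V
  let F : End (End A V) V := { f with
    map_smul' φ v := by
      obtain ⟨c, rfl⟩ := hschur φ
      simp }
  classical
  obtain ⟨a, ha⟩ := jacobson_density F (Finset.univ.image b)
  exact ⟨a, b.ext fun i ↦ (ha (b i) (by simp)).symm⟩

end SimpleModule

namespace IsCompleteSimpleFamily

variable {k : Type*} {A : Type u} [Field k] [Ring A] [Algebra k A] {ι : Type*} {V : ι → Type*}
  [∀ i, AddCommGroup (V i)] [∀ i, Module A (V i)]

lemma of_finiteDimensional [FiniteDimensional k A] (hsimple : ∀ i, IsSimpleModule A (V i))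
    (hpairwise : ∀ i j, Nonempty (V i ≃ₗ[A] V j) → i = j)
    (hcomplete : ∀ (W : Type u) [AddCommGroup W] [Module A W] [Module k W] [IsScalarTower k A W],
      IsSimpleModule A W → FiniteDimensional k W → ∃ i, Nonempty (W ≃ₗ[A] V i)) :
    IsCompleteSimpleFamily A V where
  isSimpleModule := hsimple
  eq_of_equiv e := hpairwise _ _ ⟨e⟩
  exists_equiv W _ _ _ := by
    let := Module.compHom W (algebraMap k A)
    have : IsScalarTower k A W := ⟨fun c a w ↦ by rw [Algebra.smul_def, mul_smul]; rfl⟩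
    exact hcomplete W ‹_› (finiteDimensional_of_isSimpleModule k A W)

lemma exists_linearEquiv_pi (hV : IsCompleteSimpleFamily A V) (M : Type u) [AddCommGroup M]
    [Module A M] [IsSemisimpleModule A M] [Module.Finite A M] :
    ∃ (n : ℕ) (σ : Fin n → ι), Nonempty (M ≃ₗ[A] Π j, V (σ j)) := by
  obtain ⟨n, S, e, hS⟩ := IsSemisimpleModule.exists_linearEquiv_fin_dfinsupp A M
  choose σ hσ using fun j ↦ hV.exists_equiv (S j)
  exact ⟨n, σ, ⟨e ≪≫ₗ DFinsupp.linearEquivFunOnFintype ≪≫ₗ .piCongrRight fun j ↦ (hσ j).some⟩⟩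

lemma finite_index [IsSemisimpleRing A] (hV : IsCompleteSimpleFamily A V) : Finite ι := by
  obtain ⟨n, σ, ⟨e⟩⟩ := hV.exists_linearEquiv_pi A
  have := hV.isSimpleModule
  refine .of_surjective σ fun i ↦ ?_
  have := IsSimpleModule.nontrivial A (V i)
  obtain ⟨v, hv⟩ := exists_ne (0 : V i)
  let f : (Π j, V (σ j)) →ₗ[A] V i := LinearMap.toSpanSingleton A (V i) v ∘ₗ e.symm.toLinearMap
  have hf : f ≠ 0 := fun h ↦ hv <| by simpa [f] using LinearMap.congr_fun h (e 1)
  obtain ⟨j, hj⟩ : ∃ j, f ∘ₗ LinearMap.single A (fun j ↦ V (σ j)) j ≠ 0 := by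
    by_contra! h
    exact hf (LinearMap.pi_ext' fun j ↦ by rw [h j, LinearMap.zero_comp])
  exact ⟨j, hV.eq_of_equiv (.ofBijective _ (LinearMap.bijective_of_ne_zero hj))⟩

variable [∀ i, Module k (V i)] [∀ i, IsScalarTower k A (V i)]

section IsAlgClosed

variable (k) [IsAlgClosed k] [FiniteDimensional k A]

lemma finrank_linearMap [DecidableEq ι] (hV : IsCompleteSimpleFamily A V) (i j : ι) :
    finrank k (V i →ₗ[A] V j) = if i = j then 1 else 0 := by
  have := hV.isSimpleModule
  have (i : ι) : FiniteDimensional k (V i) := finiteDimensional_of_isSimpleModule k A (V i)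
  split_ifs with h
  · subst h
    exact finrank_end_eq_one k A (V i)
  · have hzero (f : V i →ₗ[A] V j) : f = 0 :=
      (LinearMap.bijective_or_eq_zero f).resolve_left fun hf ↦
        h (hV.eq_of_equiv (.ofBijective f hf))
    have : Subsingleton (V i →ₗ[A] V j) := ⟨fun f g ↦ (hzero f).trans (hzero g).symm⟩
    exact finrank_zero_of_subsingleton

/-- The multiplicity of `V i` in the regular module is its dimension, as `Hom(A, V i) ≃ V i`. -/
lemma finrank_eq_card_fiber (hV : IsCompleteSimpleFamily A V) {n : ℕ} {σ : Fin n → ι}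
    (e : A ≃ₗ[A] Π j, V (σ j)) (i : ι) : finrank k (V i) = Nat.card {j // σ j = i} := by
  classical
  have := hV.isSimpleModule
  have (i : ι) : FiniteDimensional k (V i) := finiteDimensional_of_isSimpleModule k A (V i)
  have (j : Fin n) : FiniteDimensional k (V (σ j) →ₗ[A] V i) :=
    .of_injective (LinearMap.restrictScalarsₗ k A _ _ k) (LinearMap.restrictScalars_injective _)
  calc finrank k (V i) = finrank k (A →ₗ[A] V i) :=
      (LinearMap.ringLmapEquivSelf A k _).finrank_eq.symm
    _ = finrank k (Π j, V (σ j) →ₗ[A] V i) :=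
      ((e.congrLeft (V i) k).trans (LinearMap.lsum A (fun j ↦ V (σ j)) k).symm).finrank_eq
    _ = Nat.card {j // σ j = i} := by
      simp [finrank_pi_fintype, hV.finrank_linearMap k, Fintype.card_subtype]

theorem sum_finrank_sq [IsSemisimpleRing A] [Fintype ι] (hV : IsCompleteSimpleFamily A V) :
    ∑ i, finrank k (V i) ^ 2 = finrank k A := by
  classical
  have := hV.isSimpleModule
  have (i : ι) : FiniteDimensional k (V i) := finiteDimensional_of_isSimpleModule k A (V i)
  obtain ⟨n, σ, ⟨e⟩⟩ := hV.exists_linearEquiv_pi A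
  calc ∑ i, finrank k (V i) ^ 2 = ∑ i, ∑ j with σ j = i, finrank k (V (σ j)) := by
        refine Finset.sum_congr rfl fun i _ ↦ ?_
        rw [Finset.sum_congr rfl fun j hj ↦ by rw [(Finset.mem_filter.1 hj).2]]
        rw [Finset.sum_const, sq, smul_eq_mul, ← Fintype.card_subtype, ← Nat.card_eq_fintype_card,
          ← hV.finrank_eq_card_fiber k e]
    _ = ∑ j, finrank k (V (σ j)) := Finset.sum_fiberwise ..
    _ = finrank k A := by rw [(e.restrictScalars k).finrank_eq, finrank_pi_fintype]

end IsAlgClosed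
end IsCompleteSimpleFamily

section DegreeOne

variable (k : Type*) {A : Type u} [Field k] [Ring A] [Algebra k A]

section

variable {V : Type*} [AddCommGroup V] [Module k V]

lemma algebraMap_end_bijective_of_finrank_eq_one (hV : finrank k V = 1) :
    Function.Bijective (algebraMap k (End k V)) := by
  have := finite_of_finrank_eq_succ hV
  exact Free.bijective_algebraMap_of_finrank_eq_one (by rw [finrank_linearMap, hV])

variable [Module A V] [IsScalarTower k A V]

variable (A) in
/-- The character `χ : A → k` through which `A` acts on a one-dimensional module. -/
noncomputable def scalarCharacter (hV : finrank k V = 1) : A →ₐ[k] k :=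
  (AlgEquiv.ofBijective (Algebra.ofId k (End k V))
    (algebraMap_end_bijective_of_finrank_eq_one k hV)).symm.toAlgHom.comp (Algebra.lsmul k k V)

lemma scalarCharacter_smul (hV : finrank k V = 1) (a : A) (v : V) :
    scalarCharacter k A hV a • v = a • v :=
  LinearMap.congr_fun (AlgEquiv.apply_symm_apply (AlgEquiv.ofBijective (Algebra.ofId k (End k V))
    (algebraMap_end_bijective_of_finrank_eq_one k hV)) (Algebra.lsmul k k V a)) v

end

namespace IsCompleteSimpleFamily

variable {ι : Type*} {V : ι → Type*} [∀ i, AddCommGroup (V i)] [∀ i, Module A (V i)]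
  [∀ i, Module k (V i)] [∀ i, IsScalarTower k A (V i)]

lemma eq_of_scalarCharacter_eq (hV : IsCompleteSimpleFamily A V) {i j : ι}
    {hi : finrank k (V i) = 1} {hj : finrank k (V j) = 1}
    (h : scalarCharacter k A hi = scalarCharacter k A hj) : i = j := by
  have := finite_of_finrank_eq_succ hi
  have := finite_of_finrank_eq_succ hj
  let e : V i ≃ₗ[k] V j := .ofFinrankEq _ _ (hi.trans hj.symm)
  exact hV.eq_of_equiv { e with
    map_smul' a v := show e (a • v) = a • e v by
      rw [← scalarCharacter_smul k hi, map_smul, h, scalarCharacter_smul] }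

lemma exists_scalarCharacter_eq (hV : IsCompleteSimpleFamily A V) (φ : A →ₐ[k] k) :
    ∃ (i : ι) (hi : finrank k (V i) = 1), scalarCharacter k A hi = φ := by
  have hφ : Function.Surjective φ := fun c ↦ ⟨algebraMap k A c, by simp⟩
  have := isSimpleModule_iff_isCoatom.2 (RingHom.ker_isMaximal_of_surjective φ hφ).out
  have := IsSimpleModule.nontrivial A (A ⧸ RingHom.ker φ)
  obtain ⟨i, ⟨e⟩⟩ := hV.exists_equiv (A ⧸ RingHom.ker φ)
  have hi : finrank k (V i) = 1 := by
    rw [← (e.restrictScalars k).finrank_eq,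
      (Ideal.quotientKerAlgEquivOfSurjective hφ).toLinearEquiv.finrank_eq, finrank_self]
  have hone : e 1 ≠ 0 := e.map_ne_zero_iff.2 one_ne_zero
  have hsmul (a : A) : a • (1 : A ⧸ RingHom.ker φ) = φ a • 1 := by
    refine (Ideal.Quotient.eq (I := RingHom.ker φ) (x := a * 1) (y := φ a • 1)).2 ?_
    simp [RingHom.mem_ker]
  refine ⟨i, hi, AlgHom.ext fun a ↦ smul_left_injective k hone ?_⟩
  calc scalarCharacter k A hi a • e 1 = e (a • 1) := by rw [scalarCharacter_smul, map_smul]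
    _ = φ a • e 1 := by rw [hsmul]; exact e.toLinearMap.map_smul_of_tower _ _

theorem card_finrank_eq_one (hV : IsCompleteSimpleFamily A V) :
    Nat.card {i // finrank k (V i) = 1} = Nat.card (A →ₐ[k] k) :=
  Nat.card_congr <| .ofBijective (fun i ↦ scalarCharacter k A i.2)
    ⟨fun _ _ h ↦ Subtype.ext (hV.eq_of_scalarCharacter_eq k h), fun φ ↦
      have ⟨i, hi, h⟩ := hV.exists_scalarCharacter_eq k φ; ⟨⟨i, hi⟩, h⟩⟩

end IsCompleteSimpleFamily

end DegreeOne

theorem card_algHom_monoidAlgebra (k G : Type*) [Field k] [IsAlgClosed k] [Group G] [Finite G]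
    [NeZero (Nat.card G : k)] : Nat.card (MonoidAlgebra k G →ₐ[k] k) = (commutator G).index := by
  have : HasEnoughRootsOfUnity k (Monoid.exponent (Abelianization G)) := by
    have := NeZero.of_neZero_natCast (R := k) (n := Nat.card G)
    refine .of_dvd k (n := Nat.card G) ?_
    exact Group.exponent_dvd_nat_card.trans (Subgroup.card_quotient_dvd_card _)
  calc Nat.card (MonoidAlgebra k G →ₐ[k] k) = Nat.card (G →* kˣ) :=
      Nat.card_congr ((MonoidAlgebra.lift k k G).symm.trans MonoidHom.toHomUnitsMulEquiv.toEquiv)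
    _ = Nat.card (Abelianization G →* kˣ) := Nat.card_congr Abelianization.lift
    _ = (commutator G).index := CommGroup.card_monoidHom_of_hasEnoughRootsOfUnity _ _

section Representation

open Representation
open scoped MonoidAlgebra commutatorElement

variable {k G V : Type*} [Field k] [AddCommGroup V] [Module k V]

lemma isIrreducible_ofModule' [Monoid G] [Module k[G] V] [IsScalarTower k k[G] V]
    [IsSimpleModule k[G] V] : IsIrreducible (ofModule' V : Representation k G V) := by
  rw [irreducible_iff_isSimpleModule_asModule]
  let ρ : Representation k G V := ofModule' V
  have hρ : asAlgebraHom ρ = Algebra.lsmul k k V := Equiv.apply_symm_apply (MonoidAlgebra.lift ..) _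
  exact IsSimpleModule.congr (N := V)
    { ρ.asModuleEquiv with map_smul' a v := by exact congr($hρ a v) }

variable [Group G] {ρ : Representation k G V}

lemma pow_finrank_eq_one_of_map_commutatorElement {g h : G} {c : k}
    (hc : ρ ⁅g, h⁆ = algebraMap k _ c) : c ^ finrank k V = 1 := by
  have hdet : LinearMap.det.comp ρ ⁅g, h⁆ = 1 := by
    rw [← MonoidHom.coe_toHomUnits, map_commutatorElement,
      commutatorElement_eq_one_iff_commute.2 (.all _ _), Units.val_one]
  rwa [MonoidHom.comp_apply, hc, algebraMap_end_eq_smul_id, LinearMap.det_smul, LinearMap.det_id,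
    mul_one] at hdet

variable (ρ) [IsIrreducible ρ]

include ρ in
lemma nontrivial_of_isIrreducible : Nontrivial V :=
  (IsSimpleModule.nontrivial k[G] ρ.asModule :)

variable [FiniteDimensional k V] [IsAlgClosed k]

lemma span_range_eq_top : Submodule.span k (Set.range ρ) = ⊤ := by
  have hsurj : Function.Surjective (asAlgebraHom ρ) :=
    lsmul_surjective_of_isSimpleModule k (A := k[G]) ρ.asModule
  refine eq_top_iff.2 fun f _ ↦ ?_
  obtain ⟨a, rfl⟩ := hsurj f
  rw [asAlgebraHom_def, MonoidAlgebra.lift_apply]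
  exact Submodule.sum_mem _ fun g _ ↦ Submodule.smul_mem _ _ (Submodule.subset_span ⟨g, rfl⟩)

variable {ρ}

lemma exists_eq_algebraMap_of_forall_commute {f : End k V} (hf : ∀ g, Commute f (ρ g)) :
    ∃ c : k, f = algebraMap k _ c := by
  obtain ⟨c, hc⟩ := (IsIrreducible.algebraMap_intertwiningMap_bijective_of_isAlgClosed (ρ := ρ)).2
    ⟨f, fun g ↦ hf g⟩
  exact ⟨c, congr(($hc).toLinearMap).symm⟩

variable (ρ) in
lemma exists_eq_algebraMap_of_mem_center {z : G} (hz : z ∈ Subgroup.center G) :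
    ∃ c : k, ρ z = algebraMap k _ c :=
  exists_eq_algebraMap_of_forall_commute (ρ := ρ) fun g ↦
    (show Commute z g from (Subgroup.mem_center_iff.1 hz g).symm).map ρ

lemma finrank_sq_le_index {H : Subgroup G} [H.FiniteIndex]
    (hH : ∀ h ∈ H, ∃ c : k, ρ h = algebraMap k _ c) : finrank k V ^ 2 ≤ H.index := by
  have := H.fintypeQuotientOfFiniteIndex
  let b : G ⧸ H → End k V := fun q ↦ ρ q.out
  have hspan : Submodule.span k (Set.range b) = ⊤ := by
    refine eq_top_iff.2 ((span_range_eq_top ρ).ge.trans (Submodule.span_le.2 ?_))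
    rintro _ ⟨g, rfl⟩
    obtain ⟨⟨h, hh⟩, hg⟩ := QuotientGroup.mk_out_eq_mul H g
    obtain ⟨c, hc⟩ := hH h⁻¹ (H.inv_mem hh)
    have hbg : ρ g = c • b g := calc
      ρ g = ρ ((g : G ⧸ H).out * h⁻¹) := by rw [hg, mul_inv_cancel_right]
      _ = c • b g := by rw [map_mul, hc, ← Algebra.commutes, ← Algebra.smul_def]
    rw [hbg]
    exact Submodule.smul_mem _ _ (Submodule.subset_span ⟨g, rfl⟩)
  calc finrank k V ^ 2 = finrank k (End k V) := by rw [finrank_linearMap, sq]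
    _ = Set.finrank k (Set.range b) := by rw [Set.finrank, hspan, finrank_top]
    _ ≤ Fintype.card (G ⧸ H) := finrank_range_le_card b
    _ = H.index := by rw [← Nat.card_eq_fintype_card, Subgroup.index_eq_card]

lemma finrank_eq_one_of_map_commutatorElement_eq_one (h : ∀ g h : G, ρ ⁅g, h⁆ = 1) :
    finrank k V = 1 := by
  have hscalar (g : G) : ∃ c : k, ρ g = algebraMap k _ c := by
    refine exists_eq_algebraMap_of_forall_commute (ρ := ρ) fun g' ↦ ?_
    have : g * g' = ⁅g, g'⁆ * (g' * g) := by group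
    rw [Commute, SemiconjBy, ← map_mul, this, map_mul, h, one_mul, map_mul]
  have hle := finrank_sq_le_index (H := ⊤) fun g _ ↦ hscalar g
  have := nontrivial_of_isIrreducible ρ
  have hpos : 0 < finrank k V := finrank_pos
  rw [Subgroup.index_top] at hle
  exact le_antisymm ((sq_le_one_iff₀ hpos.le).1 hle) hpos

variable {p : ℕ} [Fact p.Prime]

lemma dvd_finrank_of_map_commutatorElement_ne_one {g h : G}
    (hcenter : ⁅g, h⁆ ∈ Subgroup.center G) (hpow : ⁅g, h⁆ ^ p = 1) (hne : ρ ⁅g, h⁆ ≠ 1) :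
    p ∣ finrank k V := by
  obtain ⟨c, hc⟩ := exists_eq_algebraMap_of_mem_center ρ hcenter
  have := nontrivial_of_isIrreducible ρ
  have hcp : c ^ p = 1 := FaithfulSMul.algebraMap_injective k (End k V) <| by
    rw [map_pow, ← hc, ← map_pow, hpow, map_one, map_one]
  have hc1 : c ≠ 1 := by
    rintro rfl
    exact hne (hc.trans (map_one _))
  rw [← orderOf_eq_prime hcp hc1]
  exact orderOf_dvd_of_pow_eq_one (pow_finrank_eq_one_of_map_commutatorElement hc)

variable (ρ) in
include ρ in
theorem finrank_eq_one_or_eq_prime [Finite G]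
    (hcomm : commutator G ≤ Subgroup.center G) (hcard : Nat.card (commutator G) = p)
    (hindex : (Subgroup.center G).index ≤ p ^ 2) : finrank k V = 1 ∨ finrank k V = p := by
  by_cases! h : ∀ g h : G, ρ ⁅g, h⁆ = 1
  · exact .inl (finrank_eq_one_of_map_commutatorElement_eq_one h)
  obtain ⟨g, h, hgh⟩ := h
  have hmem : ⁅g, h⁆ ∈ commutator G :=
    Subgroup.commutator_mem_commutator (Subgroup.mem_top g) (Subgroup.mem_top h)
  have hpow : ⁅g, h⁆ ^ p = 1 := by
    simpa [hcard] using congr(($(pow_card_eq_one' (x := (⟨_, hmem⟩ : commutator G)))).val)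
  have hdvd := dvd_finrank_of_map_commutatorElement_ne_one (hcomm hmem) hpow hgh
  have hle : finrank k V ≤ p := (Nat.pow_le_pow_iff_left two_ne_zero).1 <|
    (finrank_sq_le_index fun z ↦ exists_eq_algebraMap_of_mem_center ρ).trans hindex
  have := nontrivial_of_isIrreducible ρ
  have hpos : 0 < finrank k V := finrank_pos
  exact .inr (le_antisymm hle (Nat.le_of_dvd hpos hdvd))

end Representation

namespace IsCompleteSimpleFamily

variable {k : Type u} {G : Type v} [Field k] [IsAlgClosed k] [Group G] [Finite G]
  [NeZero (Nat.card G : k)] {ι : Type*} {V : ι → Type*} [∀ i, AddCommGroup (V i)]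
  [∀ i, Module (MonoidAlgebra k G) (V i)] [∀ i, Module k (V i)]
  [∀ i, IsScalarTower k (MonoidAlgebra k G) (V i)]

lemma card_finrank_eq_one_eq_index_commutator
    (hV : IsCompleteSimpleFamily (MonoidAlgebra k G) V) :
    Nat.card {i // finrank k (V i) = 1} = (commutator G).index := by
  rw [hV.card_finrank_eq_one k, card_algHom_monoidAlgebra]

lemma card_finrank_eq_one_add (hV : IsCompleteSimpleFamily (MonoidAlgebra k G) V) {d : ℕ}
    (hd : d ≠ 1) (hdeg : ∀ i, finrank k (V i) = 1 ∨ finrank k (V i) = d) :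
    Nat.card {i // finrank k (V i) = 1} + d ^ 2 * Nat.card {i // finrank k (V i) = d} =
      Nat.card G := by
  classical
  have := hV.finite_index
  have := Fintype.ofFinite ι
  have hsq (i : ι) : finrank k (V i) ^ 2 =
      (if finrank k (V i) = 1 then 1 else 0) + d ^ 2 * if finrank k (V i) = d then 1 else 0 := by
    rcases hdeg i with h | h <;> simp [h, hd, hd.symm]
  calc _ = ∑ i, finrank k (V i) ^ 2 := by
        simp_rw [hsq, Finset.sum_add_distrib, ← Finset.mul_sum, Finset.sum_boole, Nat.cast_id,
          Nat.card_eq_fintype_card, Fintype.card_subtype]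
    _ = finrank k (MonoidAlgebra k G) := hV.sum_finrank_sq k
    _ = Nat.card G := finrank_eq_nat_card_basis (MonoidAlgebra.basis G k)

end IsCompleteSimpleFamily

section Heisenberg

open scoped commutatorElement

variable (p : ℕ) (S : Type*) [CommRing S]

namespace Heis

instance [Finite S] : Finite (Heis S) :=
  .of_injective (fun a ↦ (a.x, a.y, a.z)) fun a b h ↦ by cases a; cases b; simpa using h

/-- The projection of `H(S)` onto its abelianization `S × S`, with kernel `zSubgroup S`. -/
def xyHom : Heis S →* Multiplicative (S × S) where
  toFun a := .ofAdd (a.x, a.y)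
  map_one' := rfl
  map_mul' _ _ := rfl

/-- The parametrization `s ↦ (0, 0, s)` of `zSubgroup S`. -/
def zHom : Multiplicative S →* Heis S where
  toFun s := ⟨0, 0, s.toAdd⟩
  map_one' := rfl
  map_mul' _ _ := by ext <;> simp

end Heis

namespace HrP

/-- The projection of `Hr_p(S)` onto `S × S`, with kernel `Ksub p S`. -/
def xyHom : HrP p S →* Multiplicative (S × S) :=
  QuotientGroup.lift (pCenter p S) (Heis.xyHom S) fun _ ha ↦ Prod.ext ha.1 ha.2.1

lemma xyHom_surjective : Function.Surjective (xyHom p S) :=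
  fun v ↦ ⟨((⟨v.toAdd.1, v.toAdd.2, 0⟩ : Heis S) : HrP p S), rfl⟩

variable {p S} in
lemma mk_mem_Ksub_iff {a : Heis S} : (a : HrP p S) ∈ Ksub p S ↔ a.x = 0 ∧ a.y = 0 := by
  refine ⟨?_, fun h ↦ ⟨a, h, rfl⟩⟩
  rintro ⟨b, ⟨hbx, hby⟩, hab⟩
  obtain ⟨hx, hy, -⟩ := QuotientGroup.eq.1 hab
  simpa [hbx, hby] using And.intro hx hy

lemma ker_xyHom : (xyHom p S).ker = Ksub p S := by
  ext g
  obtain ⟨a, rfl⟩ := QuotientGroup.mk_surjective g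
  rw [mk_mem_Ksub_iff, MonoidHom.mem_ker]
  exact Prod.mk_eq_zero

lemma index_Ksub : (Ksub p S).index = Nat.card S ^ 2 := by
  rw [← ker_xyHom, Subgroup.index_ker, MonoidHom.range_eq_top.2 (xyHom_surjective p S),
    Subgroup.card_top, Nat.card_congr Multiplicative.toAdd, Nat.card_prod, sq]

/-- The parametrization `s ↦ [(0, 0, s)]` of `Ksub p S`, which identifies it with `S / pS`. -/
def zHom : Multiplicative S →* HrP p S := (QuotientGroup.mk' _).comp (Heis.zHom S)

lemma range_zHom : (zHom p S).range = Ksub p S := by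
  rw [zHom, MonoidHom.range_comp, Ksub]
  congr 1
  ext a
  refine ⟨?_, fun ⟨hx, hy⟩ ↦ ⟨.ofAdd a.z, Heis.ext hx.symm hy.symm rfl⟩⟩
  rintro ⟨s, rfl⟩
  exact ⟨rfl, rfl⟩

variable {S} in
lemma zHom_ofAdd_eq_one_iff {s : S} : zHom p S (.ofAdd s) = 1 ↔ (p : S) ∣ s :=
  (QuotientGroup.eq_one_iff (N := pCenter p S) _).trans
    ⟨fun h ↦ h.2.2, fun h ↦ ⟨rfl, rfl, h⟩⟩

lemma ker_zHom :
    (zHom p S).ker = AddSubgroup.toSubgroup (Ideal.span {(p : S)}).toAddSubgroup := by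
  ext s
  exact (zHom_ofAdd_eq_one_iff p).trans Ideal.mem_span_singleton.symm

lemma card_Ksub : Nat.card (Ksub p S) = Nat.card (S ⧸ Ideal.span {(p : S)}) := by
  rw [← range_zHom, ← Subgroup.index_ker, ker_zHom]
  rfl

lemma commutatorElement_mk (a b : Heis S) :
    ⁅(a : HrP p S), (b : HrP p S)⁆ = zHom p S (.ofAdd (a.x * b.y - b.x * a.y)) := by
  refine congr_arg (QuotientGroup.mk' (pCenter p S)) (?_ : ⁅a, b⁆ = _)
  ext <;> simp [commutatorElement_def, Heis.zHom]
  ring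

lemma commutator_eq_Ksub : commutator (HrP p S) = Ksub p S := by
  refine le_antisymm ?_ ?_
  · rw [← ker_xyHom]
    exact Abelianization.commutator_subset_ker _
  · rw [← range_zHom]
    rintro _ ⟨s, rfl⟩
    have := commutatorElement_mk p S ⟨s.toAdd, 0, 0⟩ ⟨0, 1, 0⟩
    simp only [mul_one, mul_zero, sub_zero, ofAdd_toAdd] at this
    rw [← this]
    exact Subgroup.commutator_mem_commutator (Subgroup.mem_top _) (Subgroup.mem_top _)

variable {p S} in
lemma mk_mem_center_iff {a : Heis S} :
    (a : HrP p S) ∈ Subgroup.center (HrP p S) ↔ (p : S) ∣ a.x ∧ (p : S) ∣ a.y := by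
  have hcomm (b : Heis S) :
      (b : HrP p S) * a = a * b ↔ (p : S) ∣ a.x * b.y - b.x * a.y := by
    rw [eq_comm, ← zHom_ofAdd_eq_one_iff, ← commutatorElement_mk,
      commutatorElement_eq_one_iff_mul_comm]
  rw [Subgroup.mem_center_iff, (QuotientGroup.mk_surjective (s := pCenter p S)).forall]
  simp_rw [hcomm]
  exact ⟨fun h ↦ ⟨by simpa using h ⟨0, 1, 0⟩, by simpa using h ⟨1, 0, 0⟩⟩,
    fun ⟨hx, hy⟩ b ↦ dvd_sub (hx.mul_right _) (hy.mul_left _)⟩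

lemma commutator_le_center : commutator (HrP p S) ≤ Subgroup.center (HrP p S) := by
  rw [commutator_eq_Ksub]
  intro g hg
  obtain ⟨a, rfl⟩ := QuotientGroup.mk_surjective g
  obtain ⟨hx, hy⟩ := mk_mem_Ksub_iff.1 hg
  simp [mk_mem_center_iff, hx, hy]

lemma center_eq_comap_xyHom :
    Subgroup.center (HrP p S) =
      (((Ideal.span {(p : S)}).toAddSubgroup.prod
        (Ideal.span {(p : S)}).toAddSubgroup).toSubgroup).comap (xyHom p S) := by
  ext g
  obtain ⟨a, rfl⟩ := QuotientGroup.mk_surjective g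
  exact mk_mem_center_iff.trans
    (and_congr Ideal.mem_span_singleton.symm Ideal.mem_span_singleton.symm)

lemma index_center :
    (Subgroup.center (HrP p S)).index = Nat.card (S ⧸ Ideal.span {(p : S)}) ^ 2 := by
  rw [center_eq_comap_xyHom, Subgroup.index_comap_of_surjective _ (xyHom_surjective p S), sq]
  exact AddSubgroup.index_prod _ _

lemma natCard : Nat.card (HrP p S) = Nat.card (S ⧸ Ideal.span {(p : S)}) * Nat.card S ^ 2 := by
  rw [← (Ksub p S).card_mul_index, card_Ksub, index_Ksub]

end HrP

end Heisenberg

lemma ker_castHom_zmod {m n : ℕ} (h : m ∣ n) :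
    RingHom.ker (ZMod.castHom h (ZMod m)) = Ideal.span {(m : ZMod n)} := by
  ext a
  obtain ⟨a, rfl⟩ := ZMod.intCast_surjective a
  rw [RingHom.mem_ker, map_intCast, ZMod.intCast_zmod_eq_zero_iff_dvd, Ideal.mem_span_singleton]
  refine ⟨fun hma ↦ by simpa using map_dvd (Int.castRingHom (ZMod n)) hma, fun hma ↦ ?_⟩
  rw [← ZMod.intCast_zmod_eq_zero_iff_dvd]
  simpa using map_dvd (ZMod.castHom h (ZMod m)) hma

lemma card_zmod_quotient_span {m n : ℕ} (h : m ∣ n) :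
    Nat.card (ZMod n ⧸ Ideal.span {(m : ZMod n)}) = m := by
  rw [← ker_castHom_zmod h, Nat.card_congr
    (RingHom.quotientKerEquivOfSurjective (ZMod.castHom_surjective h)).toEquiv, Nat.card_zmod]

lemma sq_mul_pow_sub_pow (p : ℕ) {n : ℕ} (hn : n ≠ 0) :
    p ^ 2 * (p ^ (2 * n - 1) - p ^ (2 * n - 2)) = (p - 1) * (p ^ n) ^ 2 := by
  obtain ⟨m, rfl⟩ := Nat.exists_eq_add_one_of_ne_zero hn
  have hodd : 2 * (m + 1) - 1 = 2 * m + 1 := by lia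
  have heven : 2 * (m + 1) - 2 = 2 * m := by lia
  rw [hodd, heven, Nat.mul_sub, Nat.sub_mul]
  congr 1 <;> ring

theorem HrP_ZModPow_card_and_degrees_general {k : Type*} [Field k] [IsAlgClosed k]
    {p : ℕ} (hp : p.Prime) {S : Type*} [CommRing S] (hS : Nat.card (S ⧸ Ideal.span {(p : S)}) = p)
    [NeZero (Nat.card (HrP p S) : k)] {ι : Type*} {V : ι → Type*} [∀ i, AddCommGroup (V i)]
    [∀ i, Module (MonoidAlgebra k (HrP p S)) (V i)] [∀ i, Module k (V i)]
    [∀ i, IsScalarTower k (MonoidAlgebra k (HrP p S)) (V i)]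
    (hV : IsCompleteSimpleFamily (MonoidAlgebra k (HrP p S)) V) :
    Nat.card (HrP p S) = p * Nat.card S ^ 2 ∧
      (∀ i, finrank k (V i) = 1 ∨ finrank k (V i) = p) ∧
      Nat.card {i // finrank k (V i) = 1} = Nat.card S ^ 2 ∧
      p ^ 2 * Nat.card {i // finrank k (V i) = p} = (p - 1) * Nat.card S ^ 2 := by
  have := Fact.mk hp
  have : Finite (HrP p S) :=
    Nat.finite_of_card_ne_zero (NeZero.of_neZero_natCast (R := k) (n := Nat.card (HrP p S))).out
  have hcard : Nat.card (HrP p S) = p * Nat.card S ^ 2 := by rw [HrP.natCard, hS]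
  have hdeg (i : ι) : finrank k (V i) = 1 ∨ finrank k (V i) = p := by
    have := hV.isSimpleModule i
    have := finiteDimensional_of_isSimpleModule k (MonoidAlgebra k (HrP p S)) (V i)
    have := isIrreducible_ofModule' (k := k) (G := HrP p S) (V := V i)
    refine finrank_eq_one_or_eq_prime (Representation.ofModule' (V i))
      (HrP.commutator_le_center p S) ?_ ?_
    · rw [HrP.commutator_eq_Ksub, HrP.card_Ksub, hS]
    · rw [HrP.index_center, hS]
  have hone : Nat.card {i // finrank k (V i) = 1} = Nat.card S ^ 2 := by
    rw [hV.card_finrank_eq_one_eq_index_commutator, HrP.commutator_eq_Ksub, HrP.index_Ksub]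
  have hsum := hV.card_finrank_eq_one_add hp.ne_one hdeg
  refine ⟨hcard, hdeg, hone, ?_⟩
  rw [Nat.sub_one_mul, ← hcard, ← hsum, hone, Nat.add_sub_cancel_left]

/-- For `G = Hr_p(ℤ/p^nℤ)` (`n ≥ 1`): `|G| = p^(2n+1)`; every irreducible
complex representation of `G` has degree `1` or `p`; there are exactly `p^(2n)` isomorphism
classes of degree `1`, and exactly `p^(2n-1) - p^(2n-2)` of degree `p`.  (The isomorphism
classes are encoded by a complete set `(V i)_{i : ι}` of pairwise non-isomorphic irreducible
representations.) -/
theorem HrP_ZModPow_card_and_degrees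
    (p : ℕ) (hp : p.Prime) (n : ℕ) (hn : 1 ≤ n)
    (ι : Type*) [Fintype ι]
    (V : ι → Type*) [∀ i, AddCommGroup (V i)]
    [∀ i, Module (MonoidAlgebra ℂ (HrP p (ZMod (p ^ n)))) (V i)]
    [∀ i, Module ℂ (V i)]
    [∀ i, IsScalarTower ℂ (MonoidAlgebra ℂ (HrP p (ZMod (p ^ n)))) (V i)]
    (hsimple : ∀ i, IsSimpleModule (MonoidAlgebra ℂ (HrP p (ZMod (p ^ n)))) (V i))
    (hfd : ∀ i, FiniteDimensional ℂ (V i))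
    (hpairwise : ∀ i j : ι,
      Nonempty (V i ≃ₗ[MonoidAlgebra ℂ (HrP p (ZMod (p ^ n)))] V j) → i = j)
    (hcomplete : ∀ (W : Type) [AddCommGroup W]
      [Module (MonoidAlgebra ℂ (HrP p (ZMod (p ^ n)))) W]
      [Module ℂ W] [IsScalarTower ℂ (MonoidAlgebra ℂ (HrP p (ZMod (p ^ n)))) W],
      IsSimpleModule (MonoidAlgebra ℂ (HrP p (ZMod (p ^ n)))) W → FiniteDimensional ℂ W →
        ∃ i : ι, Nonempty (W ≃ₗ[MonoidAlgebra ℂ (HrP p (ZMod (p ^ n)))] V i)) :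
    Nat.card (HrP p (ZMod (p ^ n))) = p ^ (2 * n + 1) ∧
      (∀ i : ι, Module.finrank ℂ (V i) = 1 ∨ Module.finrank ℂ (V i) = p) ∧
      Nat.card {i : ι // Module.finrank ℂ (V i) = 1} = p ^ (2 * n) ∧
      Nat.card {i : ι // Module.finrank ℂ (V i) = p} = p ^ (2 * n - 1) - p ^ (2 * n - 2) := by
  have hn : n ≠ 0 := Nat.one_le_iff_ne_zero.1 hn
  have : NeZero p := ⟨hp.ne_zero⟩
  obtain ⟨hcard, hdeg, hone, hprime⟩ := HrP_ZModPow_card_and_degrees_general (k := ℂ) hp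
    (card_zmod_quotient_span (dvd_pow_self p hn))
    (.of_finiteDimensional hsimple hpairwise hcomplete)
  rw [Nat.card_zmod] at hcard hone hprime
  refine ⟨hcard.trans (by ring), hdeg, hone.trans (by ring), ?_⟩
  exact Nat.eq_of_mul_eq_mul_left (pow_pos hp.pos 2) (hprime.trans (sq_mul_pow_sub_pow p hn).symm)
end
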